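/- The action of Γ_Q on R(Q,−k) by left multiplication has only finitely many orbits; that is, there is a finite subset F of R(Q,−k) such that every x ∈ R(Q,−k) equals g·y for some g ∈ Γ_Q and some y ∈ F. -/

import Mathlib

open Matrix

/-- A positive definite Hermitian matrix over the Gaussian integers. -/
structure IsPosHermitian {ι : Type*} [Fintype ι] (H : Matrix ι ι GaussianInt) : Prop where
  conjTranspose_eq : Hᴴ = H
  pos : ∀ x : ι → GaussianInt, x ≠ 0 → 0 < (star x ⬝ᵥ H *ᵥ x).re

section Reduction

variable {ι κ : Type*}

theorem toBlocks₂₂_eq_smul_one (H : Matrix (ι ⊕ Unit) (ι ⊕ Unit) GaussianInt) :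
    H.toBlocks₂₂ = H (.inr ()) (.inr ()) • 1 := by
  ext1 i j; simp [toBlocks₂₂]

variable [Fintype ι]

theorem conjTranspose_submatrix_id_mul_mul (M H : Matrix ι ι GaussianInt) (σ : κ → ι) :
    (M.submatrix id σ)ᴴ * H * M.submatrix id σ = (Mᴴ * H * M).submatrix σ σ :=
  rfl

variable [Fintype κ]

theorem star_mulVec_dotProduct_mulVec (U H : Matrix ι ι GaussianInt) (x : ι → GaussianInt) :
    star (U *ᵥ x) ⬝ᵥ H *ᵥ (U *ᵥ x) = star x ⬝ᵥ (Uᴴ * H * U) *ᵥ x := by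
  rw [star_mulVec, ← dotProduct_mulVec, mulVec_mulVec, mulVec_mulVec, Matrix.mul_assoc]

theorem eq_intCast_of_star_eq {z : GaussianInt} (h : star z = z) : z = (z.re : GaussianInt) := by
  have h2 := congrArg Zsqrtd.im h
  rw [Zsqrtd.im_star] at h2
  ext
  · simp
  · simp; omega

theorem norm_eq_one_of_isUnit {z : GaussianInt} (h : IsUnit z) : z.norm = 1 := by
  have := Zsqrtd.norm_eq_one_iff.2 h
  have h0 := GaussianInt.norm_nonneg z
  omega

theorem IsPosHermitian.diag_eq {H : Matrix ι ι GaussianInt} (hH : IsPosHermitian H) (i : ι) :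
    H i i = ((H i i).re : GaussianInt) :=
  eq_intCast_of_star_eq (congrFun (congrFun hH.conjTranspose_eq i) i)

theorem IsPosHermitian.submatrix {H : Matrix ι ι GaussianInt} (hH : IsPosHermitian H)
    (e : κ ≃ ι) : IsPosHermitian (H.submatrix e e) where
  conjTranspose_eq := by rw [conjTranspose_submatrix, hH.conjTranspose_eq]
  pos x hx := by
    have h := hH.pos (x ∘ e.symm) (fun h => hx (by
      ext1 i; simpa using congrFun h (e i)))
    rw [Matrix.submatrix_mulVec_equiv]
    have : star x ⬝ᵥ (H *ᵥ (x ∘ e.symm)) ∘ e = star (x ∘ e.symm) ⬝ᵥ H *ᵥ (x ∘ e.symm) := by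
      rw [← comp_equiv_symm_dotProduct]; rfl
    rwa [this]

theorem IsPosHermitian.toBlocks₂₁_eq {H : Matrix (ι ⊕ Unit) (ι ⊕ Unit) GaussianInt}
    (hH : IsPosHermitian H) : H.toBlocks₂₁ = H.toBlocks₁₂ᴴ := by
  ext1 i j
  exact (congrFun (congrFun hH.conjTranspose_eq (.inr i)) (.inl j)).symm

/-- The Schur complement of the last diagonal entry, multiplied by that entry. -/
def schurLast (H : Matrix (ι ⊕ Unit) (ι ⊕ Unit) GaussianInt) : Matrix ι ι GaussianInt :=
  H (.inr ()) (.inr ()) • H.toBlocks₁₁ - H.toBlocks₁₂ * H.toBlocks₂₁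

theorem IsPosHermitian.schurLast_diag_re {H : Matrix (ι ⊕ Unit) (ι ⊕ Unit) GaussianInt}
    (hH : IsPosHermitian H) (i : ι) :
    (_root_.schurLast H i i).re = (H (.inr ()) (.inr ())).re * (H (.inl i) (.inl i)).re
      - (H (.inl i) (.inr ())).norm := by
  rw [_root_.schurLast, hH.toBlocks₂₁_eq, hH.diag_eq (.inr ())]
  simp [Matrix.mul_apply, Zsqrtd.norm_def, toBlocks₁₁, toBlocks₁₂]

/-- The inductive estimate for the product of the diagonal entries `x i` and `m` of a form in
terms of the diagonal entries `s i` of its scaled Schur complement. -/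
theorem sq_prod_mul_le {m C D E : ℤ} {x s : ι → ℤ} (hm : 0 < m)
    (hx : ∀ i, 0 < x i) (hxs : ∀ i, m * x i ≤ 2 * s i) (hs : (∏ i, s i) ^ 2 ≤ C * E)
    (hDE : m ^ (2 * Fintype.card ι) * D = E * m ^ 2) :
    ((∏ i, x i) * m) ^ 2 ≤ 4 ^ Fintype.card ι * C * D := by
  have hprod : m ^ Fintype.card ι * ∏ i, x i ≤ 2 ^ Fintype.card ι * ∏ i, s i := by
    have := Finset.prod_le_prod (s := Finset.univ)
      (fun i _ => (mul_pos hm (hx i)).le) (fun i _ => hxs i)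
    simpa [Finset.prod_mul_distrib] using this
  have hpos : 0 < ∏ i, x i := Finset.prod_pos fun i _ => hx i
  have hsq : (m ^ Fintype.card ι * ∏ i, x i) ^ 2 ≤ (2 ^ Fintype.card ι * ∏ i, s i) ^ 2 :=
    pow_le_pow_left₀ (by positivity) hprod 2
  refine le_of_mul_le_mul_left ?_ (pow_pos hm (2 * Fintype.card ι))
  calc m ^ (2 * Fintype.card ι) * ((∏ i, x i) * m) ^ 2
      = m ^ 2 * (m ^ Fintype.card ι * ∏ i, x i) ^ 2 := by ring
    _ ≤ m ^ 2 * (2 ^ Fintype.card ι * ∏ i, s i) ^ 2 := by gcongr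
    _ = m ^ 2 * 4 ^ Fintype.card ι * (∏ i, s i) ^ 2 := by
        rw [show (4 : ℤ) = 2 ^ 2 by norm_num, ← pow_mul, mul_comm 2, pow_mul]; ring
    _ ≤ m ^ 2 * 4 ^ Fintype.card ι * (C * E) := by gcongr
    _ = 4 ^ Fintype.card ι * C * (E * m ^ 2) := by ring
    _ = m ^ (2 * Fintype.card ι) * (4 ^ Fintype.card ι * C * D) := by
        rw [← hDE]; ring

variable [DecidableEq ι] [DecidableEq κ]

theorem star_single_dotProduct_mulVec_single (H : Matrix ι ι GaussianInt) (i : ι) :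
    star (Pi.single i 1) ⬝ᵥ H *ᵥ (Pi.single i 1) = H i i := by
  rw [← Pi.single_star]
  simp

theorem mulVec_ne_zero_of_isUnit_det {U : Matrix ι ι GaussianInt} (hU : IsUnit U.det)
    {x : ι → GaussianInt} (hx : x ≠ 0) : U *ᵥ x ≠ 0 := fun h =>
  hx (Matrix.eq_zero_of_mulVec_eq_zero hU.ne_zero h)

theorem IsPosHermitian.diag_pos {H : Matrix ι ι GaussianInt} (hH : IsPosHermitian H) (i : ι) :
    0 < (H i i).re := by
  rw [← star_single_dotProduct_mulVec_single H i]
  exact hH.pos _ (by simp)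

theorem IsPosHermitian.det_ne_zero {H : Matrix ι ι GaussianInt} (hH : IsPosHermitian H) :
    H.det ≠ 0 := by
  intro h
  obtain ⟨v, hv, hv0⟩ := Matrix.exists_mulVec_eq_zero_iff.2 h
  have := hH.pos v hv
  simp [hv0] at this

theorem IsPosHermitian.congr {H U : Matrix ι ι GaussianInt} (hH : IsPosHermitian H)
    (hU : IsUnit U.det) : IsPosHermitian (Uᴴ * H * U) where
  conjTranspose_eq := by
    simp [Matrix.conjTranspose_mul, hH.conjTranspose_eq, Matrix.mul_assoc]
  pos x hx := by
    rw [← star_mulVec_dotProduct_mulVec]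
    exact hH.pos _ (mulVec_ne_zero_of_isUnit_det hU hx)

/-- Some constant bounds the orthogonality defect of a suitable basis of every positive definite
Hermitian lattice over the Gaussian integers of the given rank. -/
def HasReducedBases (ι : Type*) [Fintype ι] [DecidableEq ι] : Prop :=
  ∃ C : ℤ, 0 < C ∧ ∀ H : Matrix ι ι GaussianInt, IsPosHermitian H →
    ∃ U : Matrix ι ι GaussianInt, IsUnit U.det ∧
      (∏ i, ((Uᴴ * H * U) i i).re) ^ 2 ≤ C * H.det.norm

theorem HasReducedBases.of_equiv (e : ι ≃ κ) (h : HasReducedBases ι) : HasReducedBases κ := by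
  obtain ⟨C, hC, h⟩ := h
  refine ⟨C, hC, fun H hH => ?_⟩
  obtain ⟨U, hU, hb⟩ := h _ (hH.submatrix e)
  refine ⟨U.submatrix e.symm e.symm, by rwa [det_submatrix_equiv_self], ?_⟩
  rw [det_submatrix_equiv_self] at hb
  convert hb using 2
  rw [← e.symm.prod_comp]
  refine Finset.prod_congr rfl fun i _ => ?_
  have : (U.submatrix e.symm e.symm)ᴴ * H * U.submatrix e.symm e.symm
      = (Uᴴ * H.submatrix e e * U).submatrix e.symm e.symm := by
    rw [← submatrix_mul_equiv _ _ e.symm e.symm e.symm,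
      ← submatrix_mul_equiv _ _ e.symm e.symm e.symm]
    simp
  rw [this]; rfl

theorem hasReducedBases_of_isEmpty [IsEmpty ι] : HasReducedBases ι :=
  ⟨1, one_pos, fun H _ => ⟨1, by simp, by simp⟩⟩

/-- The block elimination matrix that clears the last column. -/
def eliminationMatrix (H : Matrix (ι ⊕ Unit) (ι ⊕ Unit) GaussianInt) :
    Matrix (ι ⊕ Unit) (ι ⊕ Unit) GaussianInt :=
  fromBlocks (H (.inr ()) (.inr ()) • 1) (-H.toBlocks₁₂) 0 1

theorem eliminationMatrix_mul (H : Matrix (ι ⊕ Unit) (ι ⊕ Unit) GaussianInt) :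
    eliminationMatrix H * H = fromBlocks (schurLast H) 0 H.toBlocks₂₁ H.toBlocks₂₂ := by
  conv_lhs => rw [← fromBlocks_toBlocks H]
  rw [eliminationMatrix, fromBlocks_multiply]
  simp [toBlocks₂₂_eq_smul_one, schurLast, sub_eq_add_neg]

theorem det_schurLast (H : Matrix (ι ⊕ Unit) (ι ⊕ Unit) GaussianInt) :
    H (.inr ()) (.inr ()) ^ Fintype.card ι * H.det
      = (schurLast H).det * H (.inr ()) (.inr ()) := by
  have h := congrArg det (eliminationMatrix_mul H)
  rw [det_mul, det_fromBlocks_zero₁₂, eliminationMatrix, det_fromBlocks_zero₂₁, det_smul] at h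
  simpa [toBlocks₂₂_eq_smul_one] using h

theorem IsPosHermitian.schurLast {H : Matrix (ι ⊕ Unit) (ι ⊕ Unit) GaussianInt}
    (hH : IsPosHermitian H) : IsPosHermitian (schurLast H) where
  conjTranspose_eq := by
    have h11 : H.toBlocks₁₁ᴴ = H.toBlocks₁₁ := by
      ext1 i j
      exact congrFun (congrFun hH.conjTranspose_eq (.inl i)) (.inl j)
    have hm : star (H (.inr ()) (.inr ())) = H (.inr ()) (.inr ()) :=
      congrFun (congrFun hH.conjTranspose_eq (.inr ())) (.inr ())
    rw [_root_.schurLast, hH.toBlocks₂₁_eq, conjTranspose_sub, conjTranspose_smul, h11, hm]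
    simp
  pos x hx := by
    set m := H (.inr ()) (.inr ()) with hm
    have hm0 : 0 < m.re := hH.diag_pos _
    have hmm : m = (m.re : GaussianInt) := hH.diag_eq _
    have hL : (eliminationMatrix H * H) * (eliminationMatrix H)ᴴ
        = fromBlocks (m • _root_.schurLast H) 0 0 H.toBlocks₂₂ := by
      have hms : star m = m := congrFun (congrFun hH.conjTranspose_eq (.inr ())) (.inr ())
      rw [eliminationMatrix_mul, eliminationMatrix, fromBlocks_conjTranspose, fromBlocks_multiply,
        toBlocks₂₂_eq_smul_one, hH.toBlocks₂₁_eq, ← hm]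
      simp [hms]
    have hv : (eliminationMatrix H)ᴴ *ᵥ Sum.elim x 0 ≠ 0 := by
      intro h
      apply hx
      ext1 i
      have h1 := congrFun h (.inl i)
      rw [eliminationMatrix, fromBlocks_conjTranspose, fromBlocks_mulVec, conjTranspose_smul,
        conjTranspose_one, conjTranspose_zero, Sum.elim_comp_inl, Sum.elim_comp_inr, mulVec_zero,
        add_zero, smul_mulVec, one_mulVec, Sum.elim_inl, Pi.smul_apply, smul_eq_mul, Pi.zero_apply,
        mul_eq_zero, star_eq_zero] at h1
      refine h1.resolve_left fun h0 => ?_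
      rw [hm, h0] at hm0
      exact lt_irrefl _ hm0
    have h := hH.pos _ hv
    rw [star_mulVec_dotProduct_mulVec, conjTranspose_conjTranspose, hL, fromBlocks_mulVec] at h
    have hs : star (Sum.elim x (0 : Unit → GaussianInt)) = Sum.elim (star x) 0 := by
      ext1 i; cases i <;> simp
    rw [hs, sumElim_dotProduct_sumElim] at h
    rw [Sum.elim_comp_inl, Sum.elim_comp_inr, zero_dotProduct, add_zero, mulVec_zero, add_zero,
      smul_mulVec, dotProduct_smul, hmm, smul_eq_mul, Zsqrtd.re_smul] at h
    exact (pos_iff_pos_of_mul_pos h).1 hm0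

theorem exists_norm_add_star_mul_intCast_le (m : ℤ) (hm : 0 < m) (b : GaussianInt) :
    ∃ c : GaussianInt, 2 * (b + star c * (m : GaussianInt)).norm ≤ m ^ 2 := by
  have key : ∀ r : ℤ, ∃ q : ℤ, 4 * (r + q * m) ^ 2 ≤ m ^ 2 := by
    intro r
    have h1 := Int.emod_add_mul_ediv (2 * r + m) (2 * m)
    have h2 := Int.emod_nonneg (2 * r + m) (b := 2 * m) (by omega)
    have h3 := Int.emod_lt_of_pos (2 * r + m) (b := 2 * m) (by omega)
    refine ⟨-((2 * r + m) / (2 * m)), ?_⟩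
    have h4 : 2 * (r + -((2 * r + m) / (2 * m)) * m) = (2 * r + m) % (2 * m) - m := by
      linear_combination -h1
    nlinarith
  obtain ⟨p, hp⟩ := key b.re
  obtain ⟨q, hq⟩ := key b.im
  refine ⟨⟨p, -q⟩, ?_⟩
  rw [Zsqrtd.norm_def]
  simp
  nlinarith

/-- A base change `V` of the first block extends to one of the whole lattice that fixes the last
basis vector and makes the last column small. -/
theorem exists_sizeReduced {H : Matrix (ι ⊕ Unit) (ι ⊕ Unit) GaussianInt}
    (hH : IsPosHermitian H) {V : Matrix ι ι GaussianInt} (hV : IsUnit V.det) :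
    ∃ W : Matrix (ι ⊕ Unit) (ι ⊕ Unit) GaussianInt, IsUnit W.det ∧
      (Wᴴ * H * W) (.inr ()) (.inr ()) = H (.inr ()) (.inr ()) ∧
      schurLast (Wᴴ * H * W) = Vᴴ * schurLast H * V ∧
      ∀ i, 2 * ((Wᴴ * H * W) (.inl i) (.inr ())).norm ≤ (H (.inr ()) (.inr ())).re ^ 2 := by
  set m := H (.inr ()) (.inr ()) with hm
  have hm0 : 0 < m.re := hH.diag_pos _
  have hmm : m = (m.re : GaussianInt) := hH.diag_eq _
  have hms : star m = m := congrFun (congrFun hH.conjTranspose_eq (.inr ())) (.inr ())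
  choose c hc using fun i => exists_norm_add_star_mul_intCast_le m.re hm0 ((Vᴴ * H.toBlocks₁₂) i ())
  let c' : Matrix Unit ι GaussianInt := of fun _ i => c i
  have hW : (fromBlocks V 0 c' 1)ᴴ * H * fromBlocks V 0 c' 1 =
      fromBlocks (Vᴴ * H.toBlocks₁₁ * V + c'ᴴ * H.toBlocks₂₁ * V + Vᴴ * H.toBlocks₁₂ * c'
          + m • (c'ᴴ * c'))
        (Vᴴ * H.toBlocks₁₂ + m • c'ᴴ) (H.toBlocks₂₁ * V + m • c') (m • 1) := by
    conv_lhs => rw [← fromBlocks_toBlocks H]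
    rw [fromBlocks_conjTranspose, fromBlocks_multiply, fromBlocks_multiply, toBlocks₂₂_eq_smul_one]
    simp [← hm, Matrix.add_mul]
    abel
  refine ⟨fromBlocks V 0 c' 1, by simpa using hV, ?_, ?_, fun i => ?_⟩
  · rw [hW]; simp
  · rw [hW, schurLast, schurLast]
    simp [← hm, Matrix.add_mul, Matrix.mul_add, Matrix.mul_sub, Matrix.sub_mul, smul_add,
      Matrix.mul_assoc]
    abel
  · have := hc i
    rw [← hmm] at this
    rw [hW]
    simpa [c', mul_comm] using this

theorem HasReducedBases.sum_unit (h : HasReducedBases ι) : HasReducedBases (ι ⊕ Unit) := by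
  obtain ⟨C, hC, h⟩ := h
  refine ⟨4 ^ Fintype.card ι * C, by positivity, fun H₀ hH₀ => ?_⟩
  let r : ι ⊕ Unit := .inr ()
  obtain ⟨U₀, hU₀, hmin⟩ : ∃ U₀ : Matrix (ι ⊕ Unit) (ι ⊕ Unit) GaussianInt, IsUnit U₀.det ∧
      ∀ U : Matrix (ι ⊕ Unit) (ι ⊕ Unit) GaussianInt, IsUnit U.det →
        ((U₀ᴴ * H₀ * U₀) r r).re.toNat ≤ ((Uᴴ * H₀ * U) r r).re.toNat := by
    obtain ⟨U₀, h1, h2⟩ := WellFounded.has_min (measure fun U : Matrix (ι ⊕ Unit) (ι ⊕ Unit)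
      GaussianInt => ((Uᴴ * H₀ * U) r r).re.toNat).wf {U | IsUnit U.det} ⟨1, by simp⟩
    exact ⟨U₀, h1, fun U hU => not_lt.1 (h2 U hU)⟩
  have hH := hH₀.congr hU₀
  set H := U₀ᴴ * H₀ * U₀ with hHdef
  obtain ⟨V, hV, hVb⟩ := h _ hH.schurLast
  obtain ⟨W, hW, hWr, hWs, hWb⟩ := exists_sizeReduced hH hV
  have hHW := hH.congr hW
  set m := (H r r).re with hm
  have hm0 : 0 < m := hH.diag_pos r
  have hmm : H r r = (m : GaussianInt) := hH.diag_eq r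
  have hconj : (U₀ * W)ᴴ * H₀ * (U₀ * W) = Wᴴ * H * W := by
    simp [hHdef, Matrix.mul_assoc]
  have hle : ∀ i, m ≤ ((Wᴴ * H * W) i i).re := by
    intro i
    have h1 := hmin ((U₀ * W).submatrix id (Equiv.swap r i)) (by
      rw [det_permute', det_mul]
      refine IsUnit.mul ?_ (hU₀.mul hW)
      exact (Units.isUnit _).map (Int.castRingHom GaussianInt))
    have h2 : ((U₀ * W).submatrix id (Equiv.swap r i))ᴴ * H₀ * (U₀ * W).submatrix id (Equiv.swap r i)
        = (Wᴴ * H * W).submatrix (Equiv.swap r i) (Equiv.swap r i) := by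
      rw [conjTranspose_submatrix_id_mul_mul, hconj]
    rw [h2] at h1
    simp only [submatrix_apply, Equiv.swap_apply_left] at h1
    have := hHW.diag_pos i
    omega
  have hdiag : ∀ i, m * ((Wᴴ * H * W) (.inl i) (.inl i)).re
      ≤ 2 * ((Vᴴ * schurLast H * V) i i).re := by
    intro i
    have h1 : ((Vᴴ * schurLast H * V) i i).re = m * ((Wᴴ * H * W) (.inl i) (.inl i)).re
        - ((Wᴴ * H * W) (.inl i) r).norm := by
      rw [← hWs, hHW.schurLast_diag_re, hWr]
    have h2 := hWb i
    have h3 := hle (.inl i)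
    change 2 * ((Wᴴ * H * W) (.inl i) r).norm ≤ m ^ 2 at h2
    nlinarith
  refine ⟨U₀ * W, by rw [det_mul]; exact hU₀.mul hW, ?_⟩
  have hdet : H.det.norm = H₀.det.norm := by
    rw [hHdef, det_mul, det_mul, Zsqrtd.norm_mul, Zsqrtd.norm_mul, det_conjTranspose,
      norm_eq_one_of_isUnit hU₀, norm_eq_one_of_isUnit hU₀.star]
    ring
  rw [hconj, ← hdet, Fintype.prod_sum_type]
  simp only [Finset.univ_unique, Finset.prod_singleton]
  have hr : ((Wᴴ * H * W) (.inr default) (.inr default)).re = m := congrArg Zsqrtd.re hWr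
  rw [hr]
  refine sq_prod_mul_le hm0 (fun i => hHW.diag_pos _) hdiag hVb ?_
  have h1 := congrArg Zsqrtd.norm (det_schurLast H)
  have h2 : H (.inr ()) (.inr ()) = (m : GaussianInt) := hmm
  rw [h2, Zsqrtd.norm_mul, Zsqrtd.norm_mul, ← Int.cast_pow, Zsqrtd.norm_intCast,
    Zsqrtd.norm_intCast] at h1
  rw [pow_mul', pow_two, h1]
  ring

theorem hasReducedBases_fin_sum_unit : ∀ n : ℕ, HasReducedBases (Fin n ⊕ Unit)
  | 0 => hasReducedBases_of_isEmpty.sum_unit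
  | n + 1 => ((hasReducedBases_fin_sum_unit n).of_equiv
      ((Equiv.optionEquivSumPUnit (Fin n)).symm.trans (finSuccEquiv n).symm)).sum_unit

end Reduction

section Majorant

variable {ι : Type*} [Fintype ι]

/-- The Hermitian majorant of `Q` attached to a vector `x`, scaled by `k`. It is positive definite
when `Q` has signature `(n, 1)` and `Q[x] = -k < 0`. -/
def majorant (Q : Matrix ι ι GaussianInt) (k : ℤ) (x : ι → GaussianInt) : Matrix ι ι GaussianInt :=
  (k : GaussianInt) • Q + (2 : GaussianInt) • vecMulVec (Q *ᵥ x) (star (Q *ᵥ x))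

theorem star_dotProduct_mulVec_comm {Q : Matrix ι ι GaussianInt} (hQ : Qᴴ = Q)
    (x y : ι → GaussianInt) : star (star x ⬝ᵥ Q *ᵥ y) = star y ⬝ᵥ Q *ᵥ x := by
  rw [← star_dotProduct_star, star_star, star_mulVec, hQ, dotProduct_comm, dotProduct_mulVec,
    dotProduct_comm]

theorem majorant_apply_self {Q : Matrix ι ι GaussianInt} (hQ : Qᴴ = Q) (k : ℤ)
    (x v : ι → GaussianInt) :
    star v ⬝ᵥ majorant Q k x *ᵥ v = k * (star v ⬝ᵥ Q *ᵥ v)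
      + 2 * (star (star x ⬝ᵥ Q *ᵥ v) * (star x ⬝ᵥ Q *ᵥ v)) := by
  have h : star (Q *ᵥ x) ⬝ᵥ v = star x ⬝ᵥ Q *ᵥ v := by
    rw [star_mulVec, hQ, dotProduct_mulVec]
  rw [majorant, add_mulVec, smul_mulVec, smul_mulVec, vecMulVec_mulVec, dotProduct_add,
    dotProduct_smul, dotProduct_smul, h, star_dotProduct_mulVec_comm hQ]
  simp [mul_comm]

theorem majorant_conjTranspose {Q : Matrix ι ι GaussianInt} (hQ : Qᴴ = Q) (k : ℤ)
    (x : ι → GaussianInt) : (majorant Q k x)ᴴ = majorant Q k x := by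
  rw [majorant, conjTranspose_add, conjTranspose_smul, conjTranspose_smul, hQ,
    conjTranspose_vecMulVec, star_star]
  simp

theorem conj_majorant {Q : Matrix ι ι GaussianInt} (k : ℤ) (x : ι → GaussianInt)
    (U : Matrix ι ι GaussianInt) :
    Uᴴ * majorant Q k x * U = (k : GaussianInt) • (Uᴴ * Q * U)
      + (2 : GaussianInt) • vecMulVec (Uᴴ *ᵥ (Q *ᵥ x)) (star (Uᴴ *ᵥ (Q *ᵥ x))) := by
  rw [majorant, Matrix.mul_add, Matrix.add_mul, Matrix.mul_smul, Matrix.smul_mul, Matrix.mul_smul,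
    Matrix.smul_mul, mul_vecMulVec, vecMulVec_mul, star_mulVec Uᴴ, conjTranspose_conjTranspose]

variable [DecidableEq ι]

theorem majorant_eq_mul (Q : Matrix ι ι GaussianInt) (k : ℤ) (x : ι → GaussianInt) :
    majorant Q k x = Q * ((k : GaussianInt) • 1
      + (2 : GaussianInt) • vecMulVec x (star (Q *ᵥ x))) := by
  rw [majorant, Matrix.mul_add, Matrix.mul_smul, Matrix.mul_smul, mul_vecMulVec, Matrix.mul_one]

theorem norm_det_majorant_le {Q : Matrix ι ι GaussianInt} (hQ : Qᴴ = Q) (k : ℤ)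
    {x : ι → GaussianInt} (hx : star x ⬝ᵥ Q *ᵥ x = -(k : GaussianInt)) :
    (majorant Q k x).det.norm ≤ Q.det.norm * (k ^ 2) ^ (2 * Fintype.card ι) := by
  have hQM := majorant_eq_mul Q k x
  set M : Matrix ι ι GaussianInt :=
    (k : GaussianInt) • 1 + (2 : GaussianInt) • vecMulVec x (star (Q *ᵥ x)) with hM
  have hMM : M * M = ((k : GaussianInt) ^ 2) • 1 := by
    have h : star (Q *ᵥ x) ⬝ᵥ x = -(k : GaussianInt) := by
      rw [star_mulVec, hQ, ← dotProduct_mulVec, hx]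
    have h2 : vecMulVec x (star (Q *ᵥ x)) * vecMulVec x (star (Q *ᵥ x))
        = -(k : GaussianInt) • vecMulVec x (star (Q *ᵥ x)) := by
      rw [vecMulVec_mul_vecMulVec, h]
      ext1 i j; simp [vecMulVec_apply]; ring
    rw [hM, Matrix.mul_add, Matrix.add_mul, Matrix.add_mul]
    simp only [Matrix.smul_mul, Matrix.mul_smul, h2, Matrix.one_mul, Matrix.mul_one]
    module
  have hd := congrArg (fun X => X.det.norm) hMM
  simp only [det_mul, det_smul, det_one, mul_one, Zsqrtd.norm_mul, ← Int.cast_pow,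
    Zsqrtd.norm_intCast] at hd
  have h0 := GaussianInt.norm_nonneg M.det
  have h1 := GaussianInt.norm_nonneg Q.det
  rw [hQM, det_mul, Zsqrtd.norm_mul]
  refine mul_le_mul_of_nonneg_left ?_ h1
  calc M.det.norm ≤ M.det.norm * M.det.norm := by nlinarith
    _ = (k ^ 2) ^ (2 * Fintype.card ι) := by rw [hd]; ring

end Majorant

section Lorentzian

variable {ι : Type*}

/-- The form `diag(A, -a)`. -/
def lorentzian (A : Matrix ι ι GaussianInt) (a : ℤ) : Matrix (ι ⊕ Unit) (ι ⊕ Unit) GaussianInt :=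
  fromBlocks A 0 0 (of fun _ _ => -(a : GaussianInt))

theorem lorentzian_conjTranspose {A : Matrix ι ι GaussianInt} (hA : Aᴴ = A) (a : ℤ) :
    (lorentzian A a)ᴴ = lorentzian A a := by
  rw [lorentzian, fromBlocks_conjTranspose, hA]
  congr 1

variable [Fintype ι]

theorem lorentzian_apply (A : Matrix ι ι GaussianInt) (a : ℤ) (x y : ι ⊕ Unit → GaussianInt) :
    star x ⬝ᵥ lorentzian A a *ᵥ y = star (x ∘ Sum.inl) ⬝ᵥ A *ᵥ (y ∘ Sum.inl)
      - a * (star (x (.inr ())) * y (.inr ())) := by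
  rw [lorentzian, fromBlocks_mulVec]
  simp [dotProduct, mulVec]
  ring

/-- Completing the square in a form of signature `(n, 1)` along a negative vector. -/
theorem lorentzian_square {A : Matrix ι ι GaussianInt} (hA : Aᴴ = A) (a k : ℤ)
    {x : ι ⊕ Unit → GaussianInt} (hx : star x ⬝ᵥ lorentzian A a *ᵥ x = -(k : GaussianInt))
    (v : ι ⊕ Unit → GaussianInt) :
    let z := star x ⬝ᵥ lorentzian A a *ᵥ v
    let d := x (.inr ()) • (v ∘ Sum.inl) - v (.inr ()) • (x ∘ Sum.inl)
    let p := k * v (.inr ()) + x (.inr ()) * z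
    star (x (.inr ())) * x (.inr ()) * (k * (star v ⬝ᵥ lorentzian A a *ᵥ v) + star z * z)
      = k * (star d ⬝ᵥ A *ᵥ d) + star p * p := by
  intro z d p
  have hz : z = star (x ∘ Sum.inl) ⬝ᵥ A *ᵥ (v ∘ Sum.inl) - a * (star (x (.inr ())) * v (.inr ())) :=
    lorentzian_apply A a x v
  have hzs : star z = star (v ∘ Sum.inl) ⬝ᵥ A *ᵥ (x ∘ Sum.inl)
      - a * (star (v (.inr ())) * x (.inr ())) := by
    rw [← lorentzian_apply]; exact star_dotProduct_mulVec_comm (lorentzian_conjTranspose hA a) x v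
  have hp : star p = k * star (v (.inr ())) + star (x (.inr ())) * star z := by
    simp [p]
  rw [lorentzian_apply] at hx
  rw [hp, lorentzian_apply, hzs]
  simp only [p, hz, d, star_sub, star_smul, mulVec_sub, mulVec_smul, sub_dotProduct,
    dotProduct_sub, smul_dotProduct, dotProduct_smul, smul_eq_mul]
  linear_combination (-k * star (v (.inr ())) * v (.inr ())) * hx

variable {A : Matrix ι ι GaussianInt} {a k : ℤ} {x : ι ⊕ Unit → GaussianInt}

theorem star_mul_self_eq_norm (z : GaussianInt) : star z * z = (z.norm : GaussianInt) := by
  rw [Zsqrtd.norm_eq_mul_conj, mul_comm]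

theorem IsPosHermitian.nonneg (hA : IsPosHermitian A) (x : ι → GaussianInt) :
    0 ≤ (star x ⬝ᵥ A *ᵥ x).re := by
  by_cases h : x = 0
  · simp [h]
  · exact (hA.pos x h).le

theorem last_ne_zero_of_neg (hA : IsPosHermitian A) (hk : 0 < k)
    (hx : star x ⬝ᵥ lorentzian A a *ᵥ x = -(k : GaussianInt)) : x (.inr ()) ≠ 0 := by
  intro h
  rw [lorentzian_apply, h] at hx
  have h1 := congrArg Zsqrtd.re hx
  have h2 := hA.nonneg (x ∘ Sum.inl)
  simp at h1
  omega

theorem lorentzian_square_re (hA : IsPosHermitian A)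
    (hx : star x ⬝ᵥ lorentzian A a *ᵥ x = -(k : GaussianInt)) (v : ι ⊕ Unit → GaussianInt) :
    let z := star x ⬝ᵥ lorentzian A a *ᵥ v
    let d := x (.inr ()) • (v ∘ Sum.inl) - v (.inr ()) • (x ∘ Sum.inl)
    (x (.inr ())).norm * ((star v ⬝ᵥ majorant (lorentzian A a) k x *ᵥ v).re - z.norm)
      = k * (star d ⬝ᵥ A *ᵥ d).re + (k * v (.inr ()) + x (.inr ()) * z).norm := by
  intro z d
  have h := congrArg Zsqrtd.re (lorentzian_square hA.conjTranspose_eq a k hx v)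
  rw [majorant_apply_self (lorentzian_conjTranspose hA.conjTranspose_eq a)]
  simp only [star_mul_self_eq_norm, ← Int.cast_ofNat (R := GaussianInt), Zsqrtd.re_add,
    Zsqrtd.re_smul, Zsqrtd.re_intCast] at h ⊢
  linear_combination h

theorem norm_le_majorant (hA : IsPosHermitian A) (hk : 0 < k)
    (hx : star x ⬝ᵥ lorentzian A a *ᵥ x = -(k : GaussianInt)) (v : ι ⊕ Unit → GaussianInt) :
    (star x ⬝ᵥ lorentzian A a *ᵥ v).norm
      ≤ (star v ⬝ᵥ majorant (lorentzian A a) k x *ᵥ v).re := by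
  have ht : 0 < (x (.inr ())).norm := GaussianInt.norm_pos.2 (last_ne_zero_of_neg hA hk hx)
  have h := lorentzian_square_re hA hx v
  refine sub_nonneg.1 (le_of_mul_le_mul_left (a := (x (.inr ())).norm) ?_ ht)
  rw [h, mul_zero]
  exact add_nonneg (mul_nonneg hk.le (hA.nonneg _)) (GaussianInt.norm_nonneg _)

theorem isPosHermitian_majorant (hA : IsPosHermitian A) (hk : 0 < k)
    (hx : star x ⬝ᵥ lorentzian A a *ᵥ x = -(k : GaussianInt)) :
    IsPosHermitian (majorant (lorentzian A a) k x) where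
  conjTranspose_eq :=
    majorant_conjTranspose (lorentzian_conjTranspose hA.conjTranspose_eq a) k x
  pos v hv := by
    have hz := norm_le_majorant hA hk hx v
    have h := lorentzian_square_re hA hx v
    have ht := last_ne_zero_of_neg hA hk hx
    refine lt_of_le_of_ne ((GaussianInt.norm_nonneg _).trans hz) fun h0 => hv ?_
    rw [← h0] at hz h
    have hz0 := le_antisymm hz (GaussianInt.norm_nonneg _)
    have hz1 := GaussianInt.norm_eq_zero.1 hz0
    simp only [hz1, mul_zero, add_zero, Zsqrtd.norm_zero, sub_zero] at h
    have h1 := hA.nonneg (x (.inr ()) • (v ∘ Sum.inl) - v (.inr ()) • (x ∘ Sum.inl))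
    have h2 := GaussianInt.norm_nonneg ((k : GaussianInt) * v (.inr ()))
    have h3 := mul_nonneg hk.le h1
    have h4 : v (.inr ()) = 0 := by
      have := GaussianInt.norm_eq_zero.1 (show ((k : GaussianInt) * v (.inr ())).norm = 0 by omega)
      exact (mul_eq_zero.1 this).resolve_left (by exact_mod_cast hk.ne')
    have h5 : x (.inr ()) • (v ∘ Sum.inl) - v (.inr ()) • (x ∘ Sum.inl) = 0 := by
      by_contra hne
      have := mul_pos hk (hA.pos _ hne)
      omega
    rw [h4, zero_smul, sub_zero] at h5
    ext1 i
    rcases i with i | i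
    · exact (mul_eq_zero.1 (congrFun h5 i)).resolve_left ht
    · exact h4

end Lorentzian

section Finiteness

theorem finite_abs_le (B : ℤ) : {z : GaussianInt | |z.re| ≤ B ∧ |z.im| ≤ B}.Finite := by
  refine ((Set.finite_Icc (-B) B).image2 (fun r s => (⟨r, s⟩ : GaussianInt))
    (Set.finite_Icc (-B) B)).subset fun z hz => ?_
  exact ⟨z.re, abs_le.1 hz.1, z.im, abs_le.1 hz.2, rfl⟩

theorem abs_le_of_norm_le {z : GaussianInt} {B : ℤ} (h : z.norm ≤ B) :
    |z.re| ≤ B ∧ |z.im| ≤ B := by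
  rw [Zsqrtd.norm_def] at h
  have h1 : |z.re| ≤ z.re ^ 2 := sq_abs z.re ▸ Int.le_self_sq _
  have h2 : |z.im| ≤ z.im ^ 2 := sq_abs z.im ▸ Int.le_self_sq _
  constructor <;> nlinarith [sq_nonneg z.re, sq_nonneg z.im]

variable {ι : Type*} [Fintype ι] [DecidableEq ι]

theorem IsPosHermitian.abs_le {H : Matrix ι ι GaussianInt} (hH : IsPosHermitian H) {B : ℤ}
    (hB : ∀ i, (H i i).re ≤ B) (i j : ι) : |(H i j).re| ≤ B ∧ |(H i j).im| ≤ B := by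
  have hji : H j i = star (H i j) := (congrFun (congrFun hH.conjTranspose_eq j) i).symm
  have key : ∀ c : GaussianInt, c.norm = 1 →
      0 ≤ (H i i).re + (H j j).re + 2 * (c * H i j).re := by
    intro c hc
    have h := hH.nonneg (Pi.single i 1 + Pi.single j c)
    have hs : star (Pi.single i 1 + Pi.single j c : ι → GaussianInt)
        = Pi.single i 1 + Pi.single j (star c) := by
      rw [star_add, ← Pi.single_star, ← Pi.single_star, star_one]
    have hcc := congrArg Zsqrtd.re (star_mul_self_eq_norm c)
    have hj := congrArg Zsqrtd.im (hH.diag_eq j)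
    rw [hc] at hcc
    rw [hs, mulVec_add, dotProduct_add, add_dotProduct, add_dotProduct] at h
    simp [hji] at h hcc hj ⊢
    simp [hj] at h
    linear_combination h + (H j j).re * hcc
  have h1 := key 1 (by decide)
  have h2 := key (-1) (by decide)
  have h3 := key ⟨0, 1⟩ (by decide)
  have h4 := key ⟨0, -1⟩ (by decide)
  have hi := hB i
  have hj := hB j
  simp at h1 h2 h3 h4
  constructor <;> rw [_root_.abs_le] <;> constructor <;> linarith

theorem HasReducedBases.exists_diag_le (h : HasReducedBases ι) (D : ℤ) :
    ∃ B : ℤ, ∀ H : Matrix ι ι GaussianInt, IsPosHermitian H → H.det.norm ≤ D →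
      ∃ U : Matrix ι ι GaussianInt, IsUnit U.det ∧ ∀ i, ((Uᴴ * H * U) i i).re ≤ B := by
  obtain ⟨C, hC, h⟩ := h
  refine ⟨C * D, fun H hH hD => ?_⟩
  obtain ⟨U, hU, hb⟩ := h H hH
  refine ⟨U, hU, fun i => ?_⟩
  have hpos := (hH.congr hU).diag_pos
  have h1 : 0 < ∏ j ∈ Finset.univ.erase i, ((Uᴴ * H * U) j j).re :=
    Finset.prod_pos fun j _ => hpos j
  have h2 := Finset.mul_prod_erase Finset.univ (fun j => ((Uᴴ * H * U) j j).re)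
    (Finset.mem_univ i)
  have h3 := hpos i
  calc ((Uᴴ * H * U) i i).re ≤ ∏ j, ((Uᴴ * H * U) j j).re := by
        rw [← h2]; exact le_mul_of_one_le_right h3.le h1
    _ ≤ (∏ j, ((Uᴴ * H * U) j j).re) ^ 2 := Int.le_self_sq _
    _ ≤ C * H.det.norm := hb
    _ ≤ C * D := by gcongr

/-- Two vectors whose majorants and images agree after base change are equivalent under the
unitary group of `Q`. -/
theorem exists_unitary_mulVec_eq {Q : Matrix ι ι GaussianInt} {k : ℤ} (hk : k ≠ 0)
    (hQ : Q.det ≠ 0) {x y : ι → GaussianInt} {U V : Matrix ι ι GaussianInt}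
    (hU : IsUnit U.det) (hV : IsUnit V.det)
    (hH : Uᴴ * majorant Q k x * U = Vᴴ * majorant Q k y * V)
    (hw : Uᴴ *ᵥ (Q *ᵥ x) = Vᴴ *ᵥ (Q *ᵥ y)) :
    ∃ g : Matrix ι ι GaussianInt, IsUnit g.det ∧ gᴴ * Q * g = Q ∧ g *ᵥ y = x := by
  have hQQ : Uᴴ * Q * U = Vᴴ * Q * V := by
    rw [conj_majorant, conj_majorant, hw, add_left_inj] at hH
    exact smul_right_injective _ (Int.cast_ne_zero.2 hk) hH
  have hVi := Matrix.mul_nonsing_inv V hV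
  have hg : (U * V⁻¹)ᴴ * Q * (U * V⁻¹) = Q := by
    calc (U * V⁻¹)ᴴ * Q * (U * V⁻¹) = (V⁻¹)ᴴ * (Uᴴ * Q * U) * V⁻¹ := by
          simp only [conjTranspose_mul, Matrix.mul_assoc]
      _ = (V * V⁻¹)ᴴ * Q * (V * V⁻¹) := by
          rw [hQQ]; simp only [conjTranspose_mul, Matrix.mul_assoc]
      _ = Q := by rw [hVi]; simp
  refine ⟨U * V⁻¹, ?_, hg, ?_⟩
  · rw [det_mul]
    exact hU.mul (Matrix.isUnit_nonsing_inv_det V hV)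
  · have hUdet : (Uᴴ * Q).det ≠ 0 := by
      rw [det_mul, det_conjTranspose]
      exact mul_ne_zero hU.star.ne_zero hQ
    have h : (Uᴴ * Q) *ᵥ ((U * V⁻¹) *ᵥ y - x) = 0 := by
      rw [mulVec_sub, sub_eq_zero, mulVec_mulVec, ← mulVec_mulVec x, hw]
      rw [mulVec_mulVec]
      congr 1
      rw [← Matrix.mul_assoc, hQQ, Matrix.mul_assoc, hVi, Matrix.mul_one]
    exact sub_eq_zero.1 (Matrix.eq_zero_of_mulVec_eq_zero hUdet h)

end Finiteness

/-- The action of `Γ_Q` on `R(Q,−k)` by left multiplication has only finitely many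
orbits: there is a finite subset `F` of `R(Q,−k)` such that every `x ∈ R(Q,−k)`
equals `g · y` for some `g ∈ Γ_Q` and some `y ∈ F`. Here `Q = diag(A, -a)` with `A`
an `n × n` positive definite Hermitian matrix over the Gaussian integers `ℤ[i]` and
`a` a positive integer; `Γ_Q = {g ∈ GL(n+1, ℤ[i]) : g* Q g = Q}`. -/
theorem finitely_many_orbits_gaussian (n : ℕ) (hn : 1 ≤ n)
    (A : Matrix (Fin n) (Fin n) GaussianInt) (hAherm : Aᴴ = A)
    (hApos : ∀ x : Fin n → GaussianInt, x ≠ 0 → 0 < (star x ⬝ᵥ A.mulVec x).re)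
    (a : ℤ) (ha : 0 < a) (k : ℤ) (hk : 0 < k)
    (Q : Matrix (Fin n ⊕ Unit) (Fin n ⊕ Unit) GaussianInt)
    (hQ : Q = Matrix.fromBlocks A 0 0 (Matrix.of fun _ _ => -(a : GaussianInt))) :
    ∃ F : Finset ((Fin n ⊕ Unit) → GaussianInt),
      (∀ y ∈ F, star y ⬝ᵥ Q.mulVec y = -(k : GaussianInt)) ∧
      ∀ x : (Fin n ⊕ Unit) → GaussianInt, star x ⬝ᵥ Q.mulVec x = -(k : GaussianInt) →
        ∃ y ∈ F, ∃ g : Matrix (Fin n ⊕ Unit) (Fin n ⊕ Unit) GaussianInt,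
          IsUnit g.det ∧ gᴴ * Q * g = Q ∧ g.mulVec y = x := by
  have hA : IsPosHermitian A := ⟨hAherm, hApos⟩
  change Q = lorentzian A a at hQ
  subst hQ
  set Q := lorentzian A a with hQ
  have hQh : Qᴴ = Q := lorentzian_conjTranspose hAherm a
  obtain ⟨B, hB⟩ := (hasReducedBases_fin_sum_unit n).exists_diag_le
    (Q.det.norm * (k ^ 2) ^ (2 * Fintype.card (Fin n ⊕ Unit)))
  let R : Set (Fin n ⊕ Unit → GaussianInt) := {x | star x ⬝ᵥ Q *ᵥ x = -(k : GaussianInt)}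
  have hred : ∀ x, ∃ U : Matrix (Fin n ⊕ Unit) (Fin n ⊕ Unit) GaussianInt, x ∈ R →
      IsUnit U.det ∧ ∀ i, ((Uᴴ * majorant Q k x * U) i i).re ≤ B := by
    intro x
    by_cases hx : x ∈ R
    · obtain ⟨U, hU⟩ := hB _ (isPosHermitian_majorant hA hk hx) (norm_det_majorant_le hQh k hx)
      exact ⟨U, fun _ => hU⟩
    · exact ⟨1, fun h => absurd h hx⟩
  choose U hU using hred
  let f : (Fin n ⊕ Unit → GaussianInt) →
      Matrix (Fin n ⊕ Unit) (Fin n ⊕ Unit) GaussianInt × (Fin n ⊕ Unit → GaussianInt) :=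
    fun x => ((U x)ᴴ * majorant Q k x * U x, (U x)ᴴ *ᵥ (Q *ᵥ x))
  have hfin : (f '' R).Finite := by
    have hK := finite_abs_le B
    refine Set.Finite.subset ((Set.Finite.pi' fun _ => Set.Finite.pi' fun _ => hK).prod
      (Set.Finite.pi' fun _ => hK)) ?_
    rintro _ ⟨x, hx, rfl⟩
    obtain ⟨hUx, hd⟩ := hU x hx
    have hpos := isPosHermitian_majorant hA hk hx
    refine ⟨(hpos.congr hUx).abs_le hd, fun i => abs_le_of_norm_le ?_⟩
    refine le_trans ?_ (hd i)
    have h := norm_le_majorant hA hk hx (U x *ᵥ Pi.single i 1)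
    rw [star_mulVec_dotProduct_mulVec, star_single_dotProduct_mulVec_single] at h
    have hi : ((U x)ᴴ *ᵥ (Q *ᵥ x)) i = star (star x ⬝ᵥ Q *ᵥ (U x *ᵥ Pi.single i 1)) := by
      rw [star_dotProduct_mulVec_comm hQh, star_mulVec, ← dotProduct_mulVec, ← Pi.single_star]
      simp
    change (((U x)ᴴ *ᵥ (Q *ᵥ x)) i).norm ≤ _
    rw [hi, Zsqrtd.norm_conj]
    exact h
  obtain ⟨F, hFR, hF⟩ := Set.exists_subset_bijOn R f
  have hFfin : F.Finite := hF.finite_iff_finite.2 hfin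
  refine ⟨hFfin.toFinset, fun y hy => hFR (hFfin.mem_toFinset.1 hy), fun x hx => ?_⟩
  obtain ⟨y, hy, hyx⟩ := hF.surjOn ⟨x, hx, rfl⟩
  have hQdet : Q.det ≠ 0 := by
    have h := (isPosHermitian_majorant hA hk hx).det_ne_zero
    rw [majorant_eq_mul, det_mul] at h
    exact left_ne_zero_of_mul h
  exact ⟨y, hFfin.mem_toFinset.2 hy, exists_unitary_mulVec_eq hk.ne' hQdet (hU x hx).1
    (hU y (hFR hy)).1 (congrArg Prod.fst hyx).symm (congrArg Prod.snd hyx).symm⟩
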